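/- arXiv:2001.09525 — 2 statements merged into one kernel-verified Lean document; each statement's English description precedes it below -/
import Mathlib

section
/- Let ABC be a triangle and let SPR be a minimum area isosceles container for ABC. Let m_S, m_P, m_R denote the midpoints of the sides PR, SR, SP, respectively. Then each of the three closed polygonal boundary pieces [m_P,S] ∪ [S,m_R], [m_R,P] ∪ [P,m_S], and [m_S,R] ∪ [R,m_P] contains precisely one of the three vertices A, B, C. -/
open EuclideanGeometry MeasureTheory Real

noncomputable section

/-- The Euclidean plane. -/
abbrev Pt : Type := EuclideanSpace ℝ (Fin 2)

/-- The closed triangular region with vertices `A`, `B`, `C`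
(the convex hull of the three vertices). -/
def tri (A B C : Pt) : Set Pt := convexHull ℝ {A, B, C}

/-- The area of the triangle `A B C`:
the 2-dimensional Lebesgue measure of its convex hull. -/
def triArea (A B C : Pt) : ℝ := (volume (tri A B C)).toReal

/-- A triangle is isosceles if at least two of its side lengths coincide. -/
def IsIsosceles (A B C : Pt) : Prop :=
  dist B C = dist C A ∨ dist C A = dist A B ∨ dist A B = dist B C

/-- `S P R` is an isosceles container for the triangle `A B C`:
it is a genuine isosceles triangle whose convex hull contains that of `A B C`. -/
def IsIsoscelesContainer (A B C S P R : Pt) : Prop :=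
  AffineIndependent ℝ ![S, P, R] ∧ IsIsosceles S P R ∧ tri A B C ⊆ tri S P R

/-- `S P R` is a minimum area isosceles container for the triangle `A B C`. -/
def IsMinIsoscelesContainer (A B C S P R : Pt) : Prop :=
  IsIsoscelesContainer A B C S P R ∧
    ∀ S' P' R' : Pt, IsIsoscelesContainer A B C S' P' R' →
      triArea S P R ≤ triArea S' P' R'

/-- `Z` lies on the ray starting at `X` passing through `Y`. -/
def OnRay (X Y Z : Pt) : Prop := SameRay ℝ (Y - X) (Z - X)

/-! Stretching one side of `ABC` by a factor less than `2` makes it isosceles, so a minimum area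
container has area less than twice that of `ABC`. Hence the matrix of barycentric coordinates of
`A`, `B`, `C` with respect to the container, which is row stochastic, has determinant greater than
`1 / 2` in absolute value, and this forces each column to have exactly one entry at least `1 / 2`.
For a point on the boundary of the container, having barycentric coordinate at least `1 / 2` at a
vertex means lying on the boundary piece around that vertex.

It remains to see that `A`, `B`, `C` lie on the boundary. If the spiral similarities with
multiplier `1 + ε z` about some centre kept `A`, `B`, `C` in the container for all small `ε` of
both signs, then one with `‖1 + ε z‖ > 1` could be inverted to yield a smaller container. Therefore
every side of the container is touched, and if one of `A`, `B`, `C` were interior, the other two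
would be vertices of the container; moving its third vertex would then make it smaller. -/

open Filter Topology

theorem exists_third {l m : Fin 3} (hlm : l ≠ m) :
    ∃ n, n ≠ l ∧ n ≠ m ∧ ∀ k, k = l ∨ k = m ∨ k = n := by
  decide +revert

theorem range_eq_of_fin_three {α : Type*} (f : Fin 3 → α) : Set.range f = {f 0, f 1, f 2} := by
  ext x
  simp [Fin.exists_fin_succ, eq_comm]

theorem det_eq_det_sub_row_of_sum_eq_one {ι k : Type*} [CommRing k] [Fintype ι] [DecidableEq ι]
    {M : Matrix ι ι k} (hM : ∀ i, ∑ j, M i j = 1) (i₀ : ι) :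
    M.det = (Matrix.of fun i j : {j // j ≠ i₀} ↦ M i j - M i₀ j).det := by
  set M₁ := M.updateCol i₀ 1 with hM₁
  set M₂ : Matrix ι ι k := Matrix.of fun i j ↦ M₁ i j - (if i = i₀ then 0 else 1) * M₁ i₀ j
    with hM₂
  have h₁ : M.det = M₁.det := by
    have h := M.det_updateCol_sum i₀ 1
    simp only [Pi.one_apply, one_smul] at h
    rw [← h, hM₁]
    congr 2
    ext i
    simp [hM i]
  have h₂ : M₁.det = M₂.det :=
    Matrix.det_eq_of_forall_row_eq_smul_add_const (fun i ↦ if i = i₀ then 0 else 1) i₀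
      (by simp) fun i j ↦ by simp [hM₂]
  rw [h₁, h₂, Matrix.twoBlockTriangular_det M₂ (· = i₀)
    fun i hi j hj ↦ by simp [hM₂, hM₁, hi, hj]]
  convert one_mul _ using 2
  · convert Matrix.det_eq_elem_of_subsingleton (M₂.toSquareBlockProp (· = i₀)) ⟨i₀, rfl⟩ using 2
    simp [Matrix.toSquareBlockProp_def, hM₂, hM₁]
  · congr 1
    ext ⟨i, hi⟩ ⟨j, hj⟩
    simp [hM₂, hM₁, hi, hj]

section
variable {ι k E P : Type*} [AddCommGroup E] [AddTorsor E P]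

theorem basisOf_repr_vsub [Ring k] [Module k E] (b : AffineBasis ι k P) (i : ι) (x y : P)
    (j : {j // j ≠ i}) :
    (b.basisOf i).repr (x -ᵥ y) j = b.coord j x - b.coord j y := by
  classical
  have h : (b.coord j).linear = (b.basisOf i).coord j := (b.basisOf i).ext fun l ↦ by
    rw [Module.Basis.coord_apply, Module.Basis.repr_self, AffineBasis.basisOf_apply,
      AffineMap.linearMap_vsub]
    simp [AffineBasis.coord_apply, j.2, Finsupp.single_apply, Subtype.ext_iff, eq_comm]
  rw [← Module.Basis.coord_apply, ← h, AffineMap.linearMap_vsub, vsub_eq_sub]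

theorem det_toMatrix_comp [CommRing k] [Module k E] [Fintype ι] [DecidableEq ι]
    (b : AffineBasis ι k P) (f : P →ᵃ[k] P) :
    (b.toMatrix (f ∘ b)).det = LinearMap.det f.linear := by
  obtain ⟨i₀⟩ := b.nonempty
  rw [det_eq_det_sub_row_of_sum_eq_one (b.toMatrix_row_sum_one _) i₀,
    ← LinearMap.det_toMatrix (b.basisOf i₀), ← Matrix.det_transpose]
  congr 1
  ext i j
  simp [LinearMap.toMatrix_apply, AffineBasis.toMatrix_apply, basisOf_repr_vsub]

theorem exists_affineMap_comp_eq [CommRing k] [Module k E] (b : AffineBasis ι k P) (p : ι → P) :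
    ∃ f : P →ᵃ[k] P, f ∘ b = p := by
  obtain ⟨i₀⟩ := b.nonempty
  let L : E →ₗ[k] E := (b.basisOf i₀).constr k fun j ↦ p j -ᵥ p i₀
  refine ⟨AffineMap.mk' (fun x ↦ L (x -ᵥ b i₀) +ᵥ p i₀) L (b i₀) (by simp), funext fun i ↦ ?_⟩
  obtain rfl | hi := eq_or_ne i i₀
  · simp
  · have := (b.basisOf i₀).constr_basis k (fun j ↦ p j -ᵥ p i₀) ⟨i, hi⟩
    simp_all [L]
end

section
variable {E : Type*} [NormedAddCommGroup E] [NormedSpace ℝ E] [MeasurableSpace E] [BorelSpace E]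
  [FiniteDimensional ℝ E] (μ : Measure E) [μ.IsAddHaarMeasure]

theorem addHaar_image_affineMap (f : E →ᵃ[ℝ] E) (s : Set E) :
    μ (f '' s) = ENNReal.ofReal |LinearMap.det f.linear| * μ s := by
  rw [f.decomp, ← Measure.addHaar_image_linearMap]
  have : (⇑f.linear + fun _ ↦ f 0) '' s = (fun x ↦ x + f 0) '' (f.linear '' s) := by
    rw [Set.image_image]; rfl
  rw [this]
  simp

theorem addHaar_convexHull_range {ι : Type*} [Fintype ι] [DecidableEq ι]
    (b : AffineBasis ι ℝ E) (p : ι → E) :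
    μ (convexHull ℝ (Set.range p)) =
      ENNReal.ofReal |(b.toMatrix p).det| * μ (convexHull ℝ (Set.range b)) := by
  obtain ⟨f, rfl⟩ := exists_affineMap_comp_eq b p
  rw [Set.range_comp, ← AffineMap.image_convexHull, addHaar_image_affineMap, det_toMatrix_comp]
end

section
variable {ι k E P : Type*} [AddCommGroup E] [AddTorsor E P] [DecidableEq ι]

theorem toMatrix_update [Ring k] [Module k E] (b : AffineBasis ι k P) (p : ι → P) (i : ι) (x : P) :
    b.toMatrix (Function.update p i x) = (b.toMatrix p).updateRow i (b.coords x) := by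
  ext m j
  obtain rfl | hm := eq_or_ne m i <;> simp [AffineBasis.toMatrix_apply, *]

variable [Fintype ι]

theorem det_toMatrix_update_self [CommRing k] [Module k E] (b : AffineBasis ι k P) (i : ι) (x : P) :
    (b.toMatrix (Function.update b i x)).det = b.coord i x := by
  rw [toMatrix_update, ← Matrix.cramer_transpose_apply, b.toMatrix_self, Matrix.transpose_one,
    Matrix.cramer_one, Module.End.one_apply, b.coords_apply]

theorem det_toMatrix_update_lineMap [CommRing k] [Module k E] (b : AffineBasis ι k P) (p : ι → P)
    {i j : ι} (hij : i ≠ j) (t : k) :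
    (b.toMatrix (Function.update p j (AffineMap.lineMap (p i) (p j) t))).det =
      t * (b.toMatrix p).det := by
  have hrow : b.coords (AffineMap.lineMap (p i) (p j) t) =
      (1 - t) • b.coords (p i) + t • b.coords (p j) := by
    ext l
    simp [AffineMap.apply_lineMap, AffineMap.lineMap_apply_ring]
  have hi : ((b.toMatrix p).updateRow j (b.coords (p i))).det = 0 :=
    Matrix.det_updateRow_eq_zero hij
  have hj : (b.toMatrix p).updateRow j (b.coords (p j)) = b.toMatrix p :=
    Matrix.updateRow_eq_self _ j
  rw [toMatrix_update, hrow, Matrix.det_updateRow_add, Matrix.det_updateRow_smul,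
    Matrix.det_updateRow_smul, hi, hj]
  ring

theorem affineIndependent_iff_det_toMatrix_ne_zero [Field k] [Module k E]
    (b : AffineBasis ι k P) (p : ι → P) :
    AffineIndependent k p ↔ (b.toMatrix p).det ≠ 0 := by
  have : FiniteDimensional k E := b.finiteDimensional
  rw [← isUnit_iff_ne_zero, ← Matrix.isUnit_iff_isUnit_det, b.isUnit_toMatrix_iff, iff_self_and]
  intro hp
  rw [hp.affineSpan_eq_top_iff_card_eq_finrank_add_one, b.card_eq_finrank_add_one]
end

theorem eq_of_forall_coord_eq_zero {ι k E P : Type*} [AddCommGroup E] [AddTorsor E P] [Ring k]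
    [Module k E] [Finite ι] (b : AffineBasis ι k P) {x : P} {i : ι}
    (h : ∀ j, j ≠ i → b.coord j x = 0) : x = b i := by
  classical
  cases nonempty_fintype ι
  refine b.ext_elem fun j ↦ ?_
  obtain rfl | hj := eq_or_ne j i
  · rw [b.coord_apply_eq, ← b.sum_coord_apply_eq_one x,
      Finset.sum_eq_single j (fun k _ hk ↦ h k hk) (by simp)]
  · rw [h j hj, b.coord_apply_ne hj]

theorem mem_interior_convexHull_range_iff {ι E : Type*} [Finite ι] [NormedAddCommGroup E]
    [NormedSpace ℝ E] (b : AffineBasis ι ℝ E) {x : E} :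
    x ∈ interior (convexHull ℝ (Set.range b)) ↔ ∀ i, 0 < b.coord i x := by
  rw [b.interior_convexHull]
  rfl

theorem mem_segment_midpoint_iff {ι k E : Type*} [Finite ι] [Field k] [LinearOrder k]
    [IsStrictOrderedRing k] [AddCommGroup E] [Module k E] (b : AffineBasis ι k E) {l m : ι}
    (hlm : l ≠ m) {x : E} :
    x ∈ segment k (b l) (midpoint k (b l) (b m)) ↔
      1 / 2 ≤ b.coord l x ∧ 0 ≤ b.coord m x ∧ ∀ n, n ≠ l → n ≠ m → b.coord n x = 0 := by
  classical
  cases nonempty_fintype ι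
  have hcoord (t : k) (n : ι) :
      b.coord n (AffineMap.lineMap (b l) (midpoint k (b l) (b m)) t) =
        (if n = l then 1 - t / 2 else 0) + if n = m then t / 2 else 0 := by
    rw [AffineMap.apply_lineMap, AffineMap.map_midpoint, b.coord_apply, b.coord_apply,
      midpoint_eq_smul_add, AffineMap.lineMap_apply_ring, invOf_eq_inv, smul_eq_mul]
    grind
  rw [segment_eq_image_lineMap]
  constructor
  · rintro ⟨t, ⟨ht₀, ht₁⟩, rfl⟩
    refine ⟨?_, ?_, fun n hl hm ↦ ?_⟩ <;> simp only [hcoord] <;> grind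
  · rintro ⟨hl, hm, hzero⟩
    have hsum : b.coord l x + b.coord m x = 1 := by
      rw [← b.sum_coord_apply_eq_one x, Fintype.sum_eq_add l m hlm fun n hn ↦ hzero n hn.1 hn.2]
    refine ⟨2 * b.coord m x, ⟨by linarith, by linarith⟩, b.ext_elem fun n ↦ ?_⟩
    rw [hcoord]
    grind

theorem mem_convexHull_range_update_lineMap {ι k E : Type*} [DecidableEq ι] [Field k]
    [LinearOrder k] [IsStrictOrderedRing k] [AddCommGroup E] [Module k E] (p : ι → E) {i j : ι}
    (hij : i ≠ j) {t : k} (ht : 1 ≤ t) (l : ι) :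
    p l ∈ convexHull k
      (Set.range (Function.update p j (AffineMap.lineMap (p i) (p j) t))) := by
  set q := Function.update p j (AffineMap.lineMap (p i) (p j) t) with hq
  have hvertex (l : ι) : q l ∈ convexHull k (Set.range q) := subset_convexHull _ _ ⟨l, rfl⟩
  obtain rfl | hl := eq_or_ne l j
  · have hline : p l = AffineMap.lineMap (q i) (q l) t⁻¹ := by
      rw [hq, Function.update_self, Function.update_of_ne hij, AffineMap.lineMap_lineMap_right,
        inv_mul_cancel₀ (by positivity), AffineMap.lineMap_apply_one]
    rw [hline]
    exact (convex_convexHull k _).lineMap_mem (hvertex i) (hvertex l)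
      ⟨by positivity, inv_le_one_of_one_le₀ ht⟩
  · have hfix : q l = p l := Function.update_of_ne hl _ _
    exact hfix ▸ hvertex l

theorem eventually_mem_convexHull_update {ι E : Type*} [Finite ι] [DecidableEq ι]
    [NormedAddCommGroup E] [NormedSpace ℝ E] (b : AffineBasis ι ℝ E) (i : ι) {x : E}
    (hx : x ∈ interior (convexHull ℝ (Set.range b))) :
    ∀ᶠ y in 𝓝 (b i), x ∈ convexHull ℝ (Set.range (Function.update b i y)) := by
  have : FiniteDimensional ℝ E := b.finiteDimensional
  have hcoord : Continuous (b.coord i) := (b.coord i).continuous_of_finiteDimensional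
  -- `shear y` moves the vertex `b i` to `y` and fixes the other ones.
  let shear (y : E) : E →ᵃ[ℝ] E :=
    AffineMap.id ℝ E + (LinearMap.toSpanSingleton ℝ E (y - b i)).toAffineMap.comp (b.coord i)
  have hshear (y z : E) : shear y z = z + b.coord i z • (y - b i) := by simp [shear]
  have hrange (y : E) : Set.range (Function.update b i y) = shear y '' Set.range b := by
    rw [← Set.range_comp]
    congr 1
    ext1 j
    obtain rfl | hj := eq_or_ne j i <;> simp [*, Ne.symm]
  let preimage (y : E) : E := x - (b.coord i x / b.coord i y) • (y - b i)
  have hcont : ContinuousAt preimage (b i) := by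
    refine continuousAt_const.sub <| .smul (.div continuousAt_const hcoord.continuousAt ?_) <|
      continuousAt_id.sub continuousAt_const
    simp
  have hmem : ∀ᶠ y in 𝓝 (b i), preimage y ∈ convexHull ℝ (Set.range b) :=
    hcont.eventually_mem (by simpa [preimage] using mem_interior_iff_mem_nhds.1 hx)
  have hne : ∀ᶠ y in 𝓝 (b i), b.coord i y ≠ 0 :=
    hcoord.continuousAt.eventually_ne (by simp)
  filter_upwards [hmem, hne] with y hy hy₀
  rw [hrange, ← AffineMap.image_convexHull]
  refine ⟨preimage y, hy, ?_⟩
  have hlin : b.coord i (preimage y) = b.coord i x / b.coord i y := by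
    have h : preimage y = -(b.coord i x / b.coord i y) • (y -ᵥ b i) +ᵥ x := by
      simp only [preimage, vsub_eq_sub, vadd_eq_add, neg_smul, sub_eq_neg_add]
    rw [h, AffineMap.map_vadd, map_smul, AffineMap.linearMap_vsub]
    simp only [vsub_eq_sub, b.coord_apply_eq, smul_eq_mul, vadd_eq_add]
    field_simp
    ring
  rw [hshear, hlin, sub_add_cancel]

theorem abs_sum_mul_le_of_sum_eq_zero {ι : Type*} [Fintype ι] {c e : ι → ℝ} {δ : ℝ}
    (hc : ∀ i j, c i - c j ≤ δ) (he : ∑ i, e i = 0) :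
    |∑ i, c i * e i| ≤ δ / 2 * ∑ i, |e i| := by
  cases isEmpty_or_nonempty ι
  · simp
  obtain ⟨m, hm⟩ := Finite.exists_min c
  have hcenter (i : ι) : |c i - (c m + δ / 2)| ≤ δ / 2 :=
    abs_le.2 ⟨by linarith [hm i], by linarith [hc i m]⟩
  calc |∑ i, c i * e i| = |∑ i, (c i - (c m + δ / 2)) * e i| := by
        simp [sub_mul, ← Finset.mul_sum, he]
    _ ≤ ∑ i, |c i - (c m + δ / 2)| * |e i| := by
        simpa only [abs_mul] using
          Finset.abs_sum_le_sum_abs (fun i ↦ (c i - (c m + δ / 2)) * e i) _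
    _ ≤ δ / 2 * ∑ i, |e i| := by
        rw [Finset.mul_sum]
        gcongr with i
        exact hcenter i

theorem abs_det_le_half_of_forall_le_half {M : Matrix (Fin 3) (Fin 3) ℝ}
    (hM : M ∈ Matrix.rowStochastic ℝ (Fin 3)) {j : Fin 3} (hj : ∀ i, M i j ≤ 1 / 2) :
    |M.det| ≤ 1 / 2 := by
  wlog hj₀ : j = 0 generalizing M j
  · rw [← Matrix.abs_det_submatrix_equiv_equiv 1 (Equiv.swap 0 j)]
    exact this (Matrix.reindex_mem_rowStochastic (e₁ := 1) (e₂ := (Equiv.swap 0 j).symm) hM)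
      (j := 0) (by simpa using hj) rfl
  subst hj₀
  rw [Matrix.mem_rowStochastic_iff_sum] at hM
  obtain ⟨hpos, hsum⟩ := hM
  simp only [Fin.sum_univ_three] at hsum
  let e : Fin 3 → ℝ := ![M 1 1 - M 2 1, M 2 1 - M 0 1, M 0 1 - M 1 1]
  have hdet : M.det = ∑ i, M i 0 * e i := by
    simp only [Matrix.det_fin_three, Fin.sum_univ_three, e, Matrix.cons_val,
      fun i ↦ show M i 2 = 1 - M i 0 - M i 1 by linarith [hsum i]]
    ring
  have he : ∑ i, e i = 0 := by simp [Fin.sum_univ_three, e]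
  have habs : ∑ i, |e i| ≤ 2 := by
    have hle (i : Fin 3) : M i 1 ≤ 1 := by linarith [hpos i 0, hpos i 2, hsum i]
    simp only [Fin.sum_univ_three, e, Matrix.cons_val]
    grind
  rw [hdet]
  linarith [abs_sum_mul_le_of_sum_eq_zero (c := (M · 0)) (δ := 1 / 2)
    (fun i i' ↦ by linarith [hj i, hpos i' 0]) he]

theorem abs_det_le_half_of_half_le {M : Matrix (Fin 3) (Fin 3) ℝ}
    (hM : M ∈ Matrix.rowStochastic ℝ (Fin 3)) {i i' j : Fin 3} (hi : i ≠ i')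
    (h : 1 / 2 ≤ M i j) (h' : 1 / 2 ≤ M i' j) : |M.det| ≤ 1 / 2 := by
  wlog H : i = 0 ∧ i' = 1 ∧ j = 0 generalizing M i i' j
  · have htrans : ∀ i i' : Fin 3, i ≠ i' → ∃ σ : Equiv.Perm (Fin 3), σ 0 = i ∧ σ 1 = i' := by decide
    obtain ⟨σ, hσ, hσ'⟩ := htrans i i' hi
    rw [← Matrix.abs_det_submatrix_equiv_equiv σ (Equiv.swap 0 j)]
    exact this (Matrix.reindex_mem_rowStochastic (e₁ := σ.symm) (e₂ := (Equiv.swap 0 j).symm) hM)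
      (i := 0) (i' := 1) (j := 0) (by simp)
      (by simpa [hσ] using h) (by simpa [hσ'] using h') ⟨rfl, rfl, rfl⟩
  obtain ⟨rfl, rfl, rfl⟩ := H
  rw [Matrix.mem_rowStochastic_iff_sum] at hM
  obtain ⟨hpos, hsum⟩ := hM
  let c : Fin 3 → ℝ := ![M 1 1 - M 0 1, M 0 0 - M 1 0, 0]
  let e : Fin 3 → ℝ := M 1 - M 2
  have he : ∑ k, e k = 0 := by simp [e, hsum]
  have habs : ∑ k, |e k| ≤ 2 := calc
    ∑ k, |e k| ≤ ∑ k, (M 1 k + M 2 k) := Finset.sum_le_sum fun k _ ↦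
      abs_le.2 ⟨by simp [e]; linarith [hpos 1 k], by simp [e]; linarith [hpos 2 k]⟩
    _ = 2 := by rw [Finset.sum_add_distrib, hsum, hsum]; norm_num
  simp only [Fin.sum_univ_three] at hsum
  have hdet : M.det = ∑ k, c k * e k := by
    simp only [Matrix.det_fin_three, Fin.sum_univ_three, e, c, Matrix.cons_val, Pi.sub_apply,
      fun i ↦ show M i 2 = 1 - M i 0 - M i 1 by linarith [hsum i]]
    ring
  have hc (k l : Fin 3) : c k - c l ≤ 1 / 2 := by
    fin_cases k <;> fin_cases l <;> simp [c] <;>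
      linarith [hpos 0 1, hpos 0 2, hpos 1 1, hpos 1 2, hsum 0, hsum 1]
  rw [hdet]
  linarith [abs_sum_mul_le_of_sum_eq_zero hc he]

theorem existsUnique_half_le_of_half_lt_abs_det {M : Matrix (Fin 3) (Fin 3) ℝ}
    (hM : M ∈ Matrix.rowStochastic ℝ (Fin 3)) (hdet : 1 / 2 < |M.det|) (j : Fin 3) :
    ∃! i, 1 / 2 ≤ M i j := by
  obtain ⟨i, hi⟩ : ∃ i, 1 / 2 ≤ M i j := by
    by_contra! h
    exact hdet.not_ge (abs_det_le_half_of_forall_le_half hM fun i ↦ (h i).le)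
  refine ⟨i, hi, fun i' hi' ↦ ?_⟩
  by_contra hne
  exact hdet.not_ge (abs_det_le_half_of_half_le hM hne hi' hi)

theorem exists_dist_le_lt_two_mul_dist {E P : Type*} [NormedAddCommGroup E] [NormedSpace ℝ E]
    [StrictConvexSpace ℝ E] [MetricSpace P] [NormedAddTorsor E P] {p : Fin 3 → P}
    (hp : AffineIndependent ℝ p) :
    ∃ i j k, i ≠ j ∧ i ≠ k ∧ j ≠ k ∧ dist (p i) (p k) ≤ dist (p i) (p j) ∧
      dist (p i) (p j) < 2 * dist (p i) (p k) := by
  have : Nonempty {q : Fin 3 × Fin 3 // q.1 ≠ q.2} := ⟨⟨(0, 1), by decide⟩⟩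
  obtain ⟨⟨⟨j, k⟩, hjk⟩, hmin⟩ :=
    Finite.exists_min fun q : {q : Fin 3 × Fin 3 // q.1 ≠ q.2} ↦ dist (p q.1.1) (p q.1.2)
  simp only [Subtype.forall, Prod.forall] at hmin hjk
  obtain ⟨i, hij, hik, hcover⟩ := exists_third hjk
  wlog hle : dist (p i) (p k) ≤ dist (p i) (p j) generalizing j k
  · exact this k j hjk.symm (fun a c hac ↦ dist_comm (p j) (p k) ▸ hmin a c hac) hik hij
      (fun a ↦ by grind) (le_of_not_ge hle)
  refine ⟨i, j, k, hij, hik, hjk, hle, ?_⟩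
  have hinj : Function.Injective ![i, k, j] := by
    clear * - hij hik hjk
    decide +revert
  have htri : dist (p i) (p j) < dist (p i) (p k) + dist (p k) (p j) := by
    rw [dist_lt_dist_add_dist_iff]
    exact hp.not_wbtw_of_injective i k j hinj
  linarith [hmin i k hik, dist_comm (p j) (p k)]

theorem eq_zero_of_eventually_norm_add_smul_le {E : Type*} [NormedAddCommGroup E]
    [InnerProductSpace ℝ E] {x z : E} (h : ∀ᶠ ε in 𝓝 (0 : ℝ), ‖x + ε • z‖ ≤ ‖x‖) : z = 0 := by
  have hneg : ∀ᶠ ε in 𝓝 (0 : ℝ), ‖x + (-ε) • z‖ ≤ ‖x‖ :=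
    (continuous_neg.tendsto' (0 : ℝ) 0 neg_zero).eventually h
  have hne : ∀ᶠ ε in 𝓝[≠] (0 : ℝ), ε ≠ 0 := eventually_mem_nhdsWithin
  obtain ⟨ε, ⟨hpos, hneg⟩, hε⟩ := (((h.and hneg).filter_mono nhdsWithin_le_nhds).and hne).exists
  rw [neg_smul, ← sub_eq_add_neg] at hneg
  have hpar := parallelogram_law_with_norm ℝ x (ε • z)
  have hzero : ‖ε • z‖ = 0 := by
    nlinarith [norm_nonneg (x + ε • z), norm_nonneg (x - ε • z), norm_nonneg (ε • z)]
  exact (smul_eq_zero.1 (norm_eq_zero.1 hzero)).resolve_left hε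

/-- The standard identification of the complex numbers with the Euclidean plane; it is used to
write the similarities of the plane as multiplications. -/
def complexEquivPlane : ℂ ≃ₗᵢ[ℝ] Pt := Complex.orthonormalBasisOneI.repr

/-- The spiral similarity with centre `O` and multiplier `w`: the composition of the rotation by
`arg w` and the dilation by `‖w‖`, both about `O`. For `w = 0` it is constant. -/
def spiral (O : Pt) (w : ℂ) : Pt →ᵃ[ℝ] Pt :=
  AffineMap.mk' (fun X ↦ complexEquivPlane (w * complexEquivPlane.symm (X -ᵥ O)) +ᵥ O)
    (complexEquivPlane.toLinearEquiv.toLinearMap ∘ₗ Algebra.lmul ℝ ℂ w ∘ₗ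
      complexEquivPlane.toLinearEquiv.symm.toLinearMap) O (by simp)

section spiral
variable (O X Y : Pt) (w z : ℂ)

theorem spiral_apply :
    spiral O w X = complexEquivPlane (w * complexEquivPlane.symm (X - O)) + O := rfl

theorem spiral_self : spiral O w O = O := by simp [spiral_apply]

theorem spiral_one_add_smul (ε : ℝ) :
    spiral O (1 + ε • z) X = X + ε • (spiral O z X - O) := by
  rw [spiral_apply, spiral_apply, add_sub_cancel_right, add_mul, one_mul, smul_mul_assoc,
    map_add, map_smul, LinearIsometryEquiv.apply_symm_apply]
  abel

theorem midpoint_spiral_conj :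
    midpoint ℝ (spiral O w X) (spiral O (starRingEnd ℂ w) X) = AffineMap.lineMap O X w.re := by
  have hadd : complexEquivPlane (w * complexEquivPlane.symm (X - O)) +
      complexEquivPlane (starRingEnd ℂ w * complexEquivPlane.symm (X - O)) =
        (2 * w.re) • (X - O) := by
    rw [← map_add, ← add_mul, Complex.add_conj, ← Complex.real_smul, map_smul,
      LinearIsometryEquiv.apply_symm_apply]
  rw [midpoint_eq_smul_add, AffineMap.lineMap_apply, spiral_apply, spiral_apply,
    add_add_add_comm, hadd, invOf_eq_inv, vsub_eq_sub, vadd_eq_add]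
  module

theorem spiral_spiral : spiral O w (spiral O z X) = spiral O (w * z) X := by
  simp [spiral_apply, mul_assoc]

theorem spiral_one : spiral O 1 X = X := by simp [spiral_apply]

theorem dist_spiral : dist (spiral O w X) (spiral O w Y) = ‖w‖ * dist X Y := by
  rw [spiral_apply, spiral_apply, dist_add_right, LinearIsometryEquiv.dist_map, dist_eq_norm,
    ← mul_sub, norm_mul, ← map_sub, sub_sub_sub_cancel_right, LinearIsometryEquiv.norm_map,
    dist_eq_norm]

theorem det_linear_spiral : LinearMap.det (spiral O w).linear = ‖w‖ ^ 2 := by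
  rw [← Complex.normSq_eq_norm_sq, ← Algebra.norm_complex_apply, Algebra.norm_apply]
  exact LinearMap.det_conj _ complexEquivPlane.toLinearEquiv

theorem exists_spiral_eq {O X : Pt} (hX : X ≠ O) : ∃ w, spiral O w X = Y := by
  refine ⟨complexEquivPlane.symm (Y - O) / complexEquivPlane.symm (X - O), ?_⟩
  rw [spiral_apply, div_mul_cancel₀ _ (by simpa [sub_eq_zero] using hX)]
  simp
end spiral

theorem coord_spiral_one_add_smul {ι : Type*} (b : AffineBasis ι ℝ Pt) (i : ι) (O X : Pt) (z : ℂ)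
    (ε : ℝ) : b.coord i (spiral O (1 + ε • z) X) =
      b.coord i X + ε * (b.coord i (spiral O z X) - b.coord i O) := by
  rw [spiral_one_add_smul, add_comm, ← vadd_eq_add, AffineMap.map_vadd, map_smul, ← vsub_eq_sub,
    AffineMap.linearMap_vsub, vsub_eq_sub, smul_eq_mul, vadd_eq_add, add_comm]

theorem eventually_coord_spiral_nonneg {ι : Type*} (b : AffineBasis ι ℝ Pt) {i : ι} (O : Pt)
    {X : Pt} (z : ℂ) (hX : 0 < b.coord i X) :
    ∀ᶠ ε in 𝓝 (0 : ℝ), 0 ≤ b.coord i (spiral O (1 + ε • z) X) := by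
  simp only [coord_spiral_one_add_smul]
  have hcont : Continuous fun ε : ℝ ↦
      b.coord i X + ε * (b.coord i (spiral O z X) - b.coord i O) := by fun_prop
  exact (hcont.tendsto' 0 _ (by simp)).eventually (le_mem_nhds hX)

/-- The family `T` of points is isosceles with apex `T a`: all the others are at the same
distance from it. -/
def HasApex {ι P : Type*} [Dist P] (T : ι → P) (a : ι) : Prop :=
  ∀ i j, i ≠ a → j ≠ a → dist (T a) (T i) = dist (T a) (T j)

theorem hasApex_iff {P : Type*} [Dist P] {T : Fin 3 → P} {a i j : Fin 3} (hi : i ≠ a)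
    (hj : j ≠ a) (hij : i ≠ j) : HasApex T a ↔ dist (T a) (T i) = dist (T a) (T j) := by
  refine ⟨fun h ↦ h i j hi hj, fun h k l hk hl ↦ ?_⟩
  have hcover (m : Fin 3) (hm : m ≠ a) : m = i ∨ m = j := by lia
  obtain rfl | rfl := hcover k hk <;> obtain rfl | rfl := hcover l hl <;> simp only [h]

theorem HasApex.update_lineMap_midpoint {E P : Type*} [NormedAddCommGroup E]
    [InnerProductSpace ℝ E] [MetricSpace P] [NormedAddTorsor E P] {T : Fin 3 → P}
    {a i j : Fin 3} (hT : HasApex T a) (hi : i ≠ a) (hj : j ≠ a) (hij : i ≠ j) (t : ℝ) :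
    HasApex (Function.update T a (AffineMap.lineMap (T a) (midpoint ℝ (T i) (T j)) t)) a := by
  rw [hasApex_iff hi hj hij, Function.update_self, Function.update_of_ne hi,
    Function.update_of_ne hj, ← AffineSubspace.mem_perpBisector_iff_dist_eq]
  exact AffineMap.lineMap_mem _ (AffineSubspace.mem_perpBisector_iff_dist_eq.2 (hT i j hi hj))
    (AffineSubspace.midpoint_mem_perpBisector _ _)

theorem exists_hasApex_update_lineMap {E P : Type*} [NormedAddCommGroup E] [NormedSpace ℝ E]
    [StrictConvexSpace ℝ E] [MetricSpace P] [NormedAddTorsor E P] {p : Fin 3 → P}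
    (hp : AffineIndependent ℝ p) :
    ∃ i k, ∃ t : ℝ, i ≠ k ∧ 1 ≤ t ∧ t < 2 ∧
      HasApex (Function.update p k (AffineMap.lineMap (p i) (p k) t)) i := by
  obtain ⟨i, j, k, hij, hik, hjk, hle, hlt⟩ := exists_dist_le_lt_two_mul_dist hp
  have hpos : 0 < dist (p i) (p k) := dist_pos.2 (hp.injective.ne hik)
  refine ⟨i, k, dist (p i) (p j) / dist (p i) (p k), hik, (one_le_div₀ hpos).2 hle,
    (div_lt_iff₀ hpos).2 hlt, ?_⟩
  rw [hasApex_iff hij.symm hik.symm hjk, Function.update_self, Function.update_of_ne hjk,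
    Function.update_of_ne hik, dist_left_lineMap, Real.norm_of_nonneg (by positivity),
    div_mul_cancel₀ _ hpos.ne']

theorem HasApex.update_spiral {ι : Type*} [DecidableEq ι] {T : ι → Pt} {a n : ι}
    (hT : HasApex T a) (hn : n ≠ a) {w : ℂ} (hw : ‖w‖ = 1) :
    HasApex (Function.update T n (spiral (T a) w (T n))) a := by
  have hdist (i : ι) :
      dist (T a) (Function.update T n (spiral (T a) w (T n)) i) = dist (T a) (T i) := by
    obtain rfl | hi := eq_or_ne i n
    · have := dist_spiral (T a) (T a) (T i) w
      rwa [spiral_self, hw, one_mul, ← Function.update_self i (spiral (T a) w (T i)) T] at this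
    · rw [Function.update_of_ne hi]
  intro i j hi hj
  rw [Function.update_of_ne hn.symm, hdist, hdist, hT i j hi hj]

theorem frequently_coord_spiral_lt_one {ι : Type*} (b : AffineBasis ι ℝ Pt) {a n : ι}
    (hn : n ≠ a) :
    ∃ᶠ θ : ℝ in 𝓝 0, b.coord n (spiral (b a) (Complex.exp (θ * Complex.I)) (b n)) < 1 := by
  intro hev
  simp only [not_lt] at hev
  have hneg := (continuous_neg.tendsto' (0 : ℝ) 0 neg_zero).eventually hev
  have hcos : ∀ᶠ θ in 𝓝[>] (0 : ℝ), Real.cos θ < 1 := by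
    filter_upwards [Ioo_mem_nhdsGT Real.pi_pos] with θ hθ
    rw [← Real.cos_zero]
    exact Real.cos_lt_cos_of_nonneg_of_le_pi le_rfl hθ.2.le hθ.1
  obtain ⟨θ, ⟨hpos, hneg⟩, hcos⟩ :=
    (((hev.and hneg).filter_mono nhdsWithin_le_nhds).and hcos).exists
  have hconj : starRingEnd ℂ (Complex.exp (θ * Complex.I)) =
      Complex.exp ((-θ : ℝ) * Complex.I) := by
    rw [← Complex.exp_conj]
    simp
  -- One of the two rotations by `±θ` decreases the coordinate: their midpoint is at `cos θ < 1`.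
  have hmid := congrArg (b.coord n)
    (midpoint_spiral_conj (b a) (b n) (Complex.exp (θ * Complex.I)))
  rw [hconj, Complex.exp_ofReal_mul_I_re, AffineMap.map_midpoint, AffineMap.apply_lineMap,
    b.coord_apply_eq, b.coord_apply_ne hn, AffineMap.lineMap_apply_ring, midpoint_eq_smul_add,
    invOf_eq_inv, smul_eq_mul] at hmid
  linarith

theorem frequently_hasApex_update (b : AffineBasis (Fin 3) ℝ Pt) {a : Fin 3} (ha : HasApex b a)
    (n : Fin 3) :
    ∃ᶠ y in 𝓝 (b n), HasApex (Function.update b n y) a ∧ b.coord n y < 1 := by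
  obtain rfl | hn := eq_or_ne n a
  · obtain ⟨i, hi⟩ := exists_ne n
    obtain ⟨j, hji, hj, -⟩ := exists_third hi
    have htends : Tendsto (AffineMap.lineMap (b n) (midpoint ℝ (b i) (b j))) (𝓝[>] (0 : ℝ))
        (𝓝 (b n)) :=
      (AffineMap.lineMap_continuous.tendsto' 0 _ (by simp)).mono_left nhdsWithin_le_nhds
    refine htends.frequently (Eventually.frequently ?_)
    filter_upwards [self_mem_nhdsWithin] with t ht
    refine ⟨ha.update_lineMap_midpoint hi hj hji.symm t, ?_⟩
    rw [AffineMap.apply_lineMap, AffineMap.map_midpoint, b.coord_apply_eq,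
      b.coord_apply_ne hi.symm, b.coord_apply_ne hj.symm, midpoint_self,
      AffineMap.lineMap_apply_ring]
    linarith [Set.mem_Ioi.1 ht]
  · have hcont : Continuous fun θ : ℝ ↦ spiral (b a) (Complex.exp (θ * Complex.I)) (b n) := by
      simp only [spiral_apply]
      fun_prop
    refine (hcont.tendsto' 0 _ (by simp [spiral_one])).frequently ?_
    exact (frequently_coord_spiral_lt_one b hn).mono fun θ hθ ↦
      ⟨ha.update_spiral hn (Complex.norm_exp_ofReal_mul_I θ), hθ⟩

/-- The triangle with vertices `b` is a minimum area isosceles container for the triangle with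
vertices `V`. Vertices are indexed by `Fin 3`, so that symmetric cases are handled at once, and
the area of a competing container is measured, in units of the area of `b`, by the determinant of
its barycentric coordinates with respect to `b`. -/
structure IsMinContainer (V : Fin 3 → Pt) (b : AffineBasis (Fin 3) ℝ Pt) : Prop where
  exists_hasApex : ∃ a, HasApex b a
  mem_convexHull : ∀ i, V i ∈ convexHull ℝ (Set.range b)
  one_le_abs_det : ∀ {T : Fin 3 → Pt} {a : Fin 3}, AffineIndependent ℝ T → HasApex T a →
    (∀ i, V i ∈ convexHull ℝ (Set.range T)) → 1 ≤ |(b.toMatrix T).det|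

namespace IsMinContainer
variable {V : Fin 3 → Pt} {b : AffineBasis (Fin 3) ℝ Pt} (h : IsMinContainer V b)
include h

theorem coord_nonneg (i l : Fin 3) : 0 ≤ b.coord l (V i) := by
  have := h.mem_convexHull i
  rw [b.convexHull_eq_nonneg_coord] at this
  exact this l

theorem norm_le_one_of_spiral_mem {O : Pt} {w : ℂ}
    (hw : ∀ i, spiral O w (V i) ∈ convexHull ℝ (Set.range b)) : ‖w‖ ≤ 1 := by
  obtain rfl | hw₀ := eq_or_ne w 0
  · simp
  obtain ⟨a, ha⟩ := h.exists_hasApex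
  have hdet : (b.toMatrix (spiral O w⁻¹ ∘ b)).det = ‖w⁻¹‖ ^ 2 := by
    rw [det_toMatrix_comp, det_linear_spiral]
  have hindep : AffineIndependent ℝ (spiral O w⁻¹ ∘ b) := by
    rw [affineIndependent_iff_det_toMatrix_ne_zero b, hdet]
    exact pow_ne_zero _ (norm_ne_zero_iff.2 (inv_ne_zero hw₀))
  have hapex : HasApex (spiral O w⁻¹ ∘ b) a := fun i j hi hj ↦ by
    simp only [Function.comp_apply, dist_spiral, ha i j hi hj]
  have hle := h.one_le_abs_det hindep hapex fun i ↦ by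
    rw [Set.range_comp, ← AffineMap.image_convexHull]
    exact ⟨_, hw i, by rw [spiral_spiral, inv_mul_cancel₀ hw₀, spiral_one]⟩
  rw [hdet, abs_of_nonneg (by positivity), one_le_sq_iff₀ (norm_nonneg _), norm_inv] at hle
  exact (one_le_inv₀ (norm_pos_iff.2 hw₀)).1 hle

theorem eq_zero_of_eventually_coord_nonneg {O : Pt} {z : ℂ}
    (hz : ∀ i l, ∀ᶠ ε in 𝓝 (0 : ℝ), 0 ≤ b.coord l (spiral O (1 + ε • z) (V i))) : z = 0 := by
  refine eq_zero_of_eventually_norm_add_smul_le (x := 1) ?_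
  filter_upwards [eventually_all.2 fun i ↦ eventually_all.2 (hz i)] with ε hε
  rw [norm_one]
  refine h.norm_le_one_of_spiral_mem (O := O) fun i ↦ ?_
  rw [b.convexHull_eq_nonneg_coord]
  exact hε i

theorem exists_coord_eq_zero (l : Fin 3) : ∃ i, b.coord l (V i) = 0 := by
  by_contra! hl
  refine one_ne_zero (h.eq_zero_of_eventually_coord_nonneg (O := b l) (z := 1) fun i m ↦ ?_)
  obtain rfl | hm := eq_or_ne m l
  · exact eventually_coord_spiral_nonneg b _ _ ((h.coord_nonneg i m).lt_of_ne' (hl i))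
  · filter_upwards [lt_mem_nhds neg_one_lt_zero] with ε hε
    rw [coord_spiral_one_add_smul, spiral_one, b.coord_apply_ne hm]
    nlinarith [h.coord_nonneg i m]

theorem exists_eq_vertex {i i' l : Fin 3} (hi : V i = b l) (hi' : b.coord l (V i') = 0)
    (hint : ∀ k, k ≠ i → k ≠ i' → V k ∈ interior (convexHull ℝ (Set.range b))) :
    ∃ m, m ≠ l ∧ V i' = b m := by
  simp only [mem_interior_convexHull_range_iff] at hint
  suffices ∃ m ≠ l, b.coord m (V i') = 0 by
    obtain ⟨m, hm, hzero⟩ := this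
    obtain ⟨n, hn, -, hcover⟩ := exists_third hm.symm
    refine ⟨n, hn, eq_of_forall_coord_eq_zero b fun k hk ↦ ?_⟩
    obtain rfl | rfl | rfl := hcover k <;> [assumption; assumption; contradiction]
  by_contra! hpos
  have hne : V i' ≠ b l := fun heq ↦ by simp [heq] at hi'
  obtain ⟨m, hm⟩ := exists_ne l
  obtain ⟨n, hn, hnm, -⟩ := exists_third hm.symm
  -- The point `V i'` moves along the side opposite to `b l`, while `V i = b l` stays fixed.
  obtain ⟨z, hz⟩ := exists_spiral_eq ((b m -ᵥ b n) +ᵥ b l) hne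
  have hz₀ : z = 0 := h.eq_zero_of_eventually_coord_nonneg (O := b l) fun j k ↦ by
    obtain rfl | hji := eq_or_ne j i
    · have hfix (ε : ℝ) : spiral (b l) (1 + ε • z) (V j) = V j := by rw [hi, spiral_self]
      exact .of_forall fun ε ↦ by rw [hfix]; exact h.coord_nonneg j k
    obtain rfl | hji' := eq_or_ne j i'
    · obtain rfl | hk := eq_or_ne k l
      · have hstay (ε : ℝ) : b.coord k (spiral (b k) (1 + ε • z) (V j)) = 0 := by
          rw [coord_spiral_one_add_smul, hz, AffineMap.map_vadd, AffineMap.linearMap_vsub, hi',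
            b.coord_apply_ne hm.symm, b.coord_apply_ne hn.symm]
          simp
        exact .of_forall fun ε ↦ (hstay ε).ge
      · exact eventually_coord_spiral_nonneg b _ _ ((h.coord_nonneg j k).lt_of_ne' (hpos k hk))
    · exact eventually_coord_spiral_nonneg b _ _ (hint j hji hji' k)
  have hmn : b m - b n = 0 := by simpa [hz₀, spiral_apply] using hz.symm
  exact hnm (b.ind.injective (sub_eq_zero.1 hmn)).symm

theorem exists_notMem_interior_of_eq_vertex {i i' l m : Fin 3} (hlm : l ≠ m) (hi : V i = b l)
    (hi' : V i' = b m) : ∃ k, k ≠ i ∧ k ≠ i' ∧ V k ∉ interior (convexHull ℝ (Set.range b)) := by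
  by_contra! hint
  obtain ⟨n, hnl, hnm, -⟩ := exists_third hlm
  obtain ⟨a, ha⟩ := h.exists_hasApex
  have hmem : ∀ᶠ y in 𝓝 (b n), ∀ k, V k ∈ convexHull ℝ (Set.range (Function.update b n y)) := by
    have hvertex (y : Pt) {j : Fin 3} (hj : j ≠ n) :
        b j ∈ convexHull ℝ (Set.range (Function.update b n y)) :=
      subset_convexHull _ _ ⟨j, Function.update_of_ne hj _ _⟩
    refine eventually_all.2 fun k ↦ ?_
    obtain rfl | hk := eq_or_ne k i
    · exact .of_forall fun y ↦ hi ▸ hvertex y hnl.symm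
    obtain rfl | hk' := eq_or_ne k i'
    · exact .of_forall fun y ↦ hi' ▸ hvertex y hnm.symm
    exact eventually_mem_convexHull_update b n (hint k hk hk')
  have hpos : ∀ᶠ y in 𝓝 (b n), 0 < b.coord n y :=
    (b.coord n).continuous_of_finiteDimensional.continuousAt.eventually
      (lt_mem_nhds (by simp))
  obtain ⟨y, ⟨hapex, hlt⟩, hmem, hpos⟩ :=
    ((frequently_hasApex_update b ha n).and_eventually (hmem.and hpos)).exists
  have hle := h.one_le_abs_det
    ((affineIndependent_iff_det_toMatrix_ne_zero b _).2
      (by rw [det_toMatrix_update_self]; exact hpos.ne')) hapex hmem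
  rw [det_toMatrix_update_self, abs_of_pos hpos] at hle
  exact hlt.not_ge hle

theorem notMem_interior (k : Fin 3) : V k ∉ interior (convexHull ℝ (Set.range b)) := by
  intro hk
  choose f hf using h.exists_coord_eq_zero
  have hfk (l : Fin 3) : f l ≠ k := by
    rintro rfl
    exact ((mem_interior_convexHull_range_iff b).1 hk l).ne' (hf l)
  obtain ⟨l, m, hfm, hlm⟩ : ∃ l m, f l = f m ∧ l ≠ m := by
    by_contra! hinj
    obtain ⟨l, hl⟩ := Finite.injective_iff_surjective.1 hinj k
    exact hfk l hl
  obtain ⟨n, -, -, hcover⟩ := exists_third hlm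
  have hvertex : V (f l) = b n := eq_of_forall_coord_eq_zero b fun j hj ↦ by
    obtain rfl | rfl | rfl := hcover j
    exacts [hf j, hfm ▸ hf j, absurd rfl hj]
  have hne : f l ≠ f n := fun heq ↦ by simpa [← heq, hvertex] using hf n
  have honly (j : Fin 3) (hj : j ≠ f l) (hj' : j ≠ f n) : j = k := by
    have := hfk l
    have := hfk n
    lia
  obtain ⟨m', hm', hvertex'⟩ := h.exists_eq_vertex hvertex (hf n) fun j hj hj' ↦
    honly j hj hj' ▸ hk
  obtain ⟨j, hj, hj', hint⟩ := h.exists_notMem_interior_of_eq_vertex hm'.symm hvertex hvertex'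
  exact hint (honly j hj hj' ▸ hk)

theorem half_lt_abs_det (hV : AffineIndependent ℝ V) : 1 / 2 < |(b.toMatrix V).det| := by
  obtain ⟨i, k, t, hik, ht₁, ht₂, hapex⟩ := exists_hasApex_update_lineMap hV
  have hdet := det_toMatrix_update_lineMap b V hik t
  rw [affineIndependent_iff_det_toMatrix_ne_zero b] at hV
  have hle := h.one_le_abs_det
    ((affineIndependent_iff_det_toMatrix_ne_zero b _).2
      (hdet ▸ mul_ne_zero (by positivity) hV)) hapex
    (mem_convexHull_range_update_lineMap V hik ht₁)
  rw [hdet, abs_mul, abs_of_pos (by positivity)] at hle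
  nlinarith [abs_nonneg (b.toMatrix V).det]

theorem mem_segment_union_segment_iff {l m n : Fin 3} (hlm : l ≠ m) (hln : l ≠ n) (hmn : m ≠ n)
    (i : Fin 3) :
    V i ∈ segment ℝ (midpoint ℝ (b l) (b n)) (b l) ∪ segment ℝ (b l) (midpoint ℝ (b l) (b m)) ↔
      1 / 2 ≤ b.coord l (V i) := by
  rw [Set.mem_union, segment_symm, mem_segment_midpoint_iff b hln, mem_segment_midpoint_iff b hlm]
  refine ⟨fun hi ↦ hi.elim And.left And.left, fun hi ↦ ?_⟩
  obtain ⟨k, hk⟩ : ∃ k, b.coord k (V i) = 0 := by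
    by_contra! hne
    exact h.notMem_interior i ((mem_interior_convexHull_range_iff b).2 fun k ↦
      (h.coord_nonneg i k).lt_of_ne' (hne k))
  have hk' : k = m ∨ k = n := by
    have : k ≠ l := fun heq ↦ by norm_num [← heq, hk] at hi
    lia
  obtain rfl | rfl := hk'
  · exact .inl ⟨hi, h.coord_nonneg i n, fun j hj hj' ↦ by rwa [show j = k by lia]⟩
  · exact .inr ⟨hi, h.coord_nonneg i m, fun j hj hj' ↦ by rwa [show j = k by lia]⟩

theorem existsUnique_mem_segment_union_segment (hV : AffineIndependent ℝ V) {l m n : Fin 3}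
    (hlm : l ≠ m) (hln : l ≠ n) (hmn : m ≠ n) :
    ∃! X, X ∈ Set.range V ∧ X ∈ segment ℝ (midpoint ℝ (b l) (b n)) (b l) ∪
      segment ℝ (b l) (midpoint ℝ (b l) (b m)) := by
  have hM : b.toMatrix V ∈ Matrix.rowStochastic ℝ (Fin 3) :=
    Matrix.mem_rowStochastic_iff_sum.2 ⟨h.coord_nonneg, b.toMatrix_row_sum_one V⟩
  obtain ⟨i, hi, huniq⟩ :=
    existsUnique_half_le_of_half_lt_abs_det hM (h.half_lt_abs_det hV) l
  refine ⟨V i, ⟨⟨i, rfl⟩, (h.mem_segment_union_segment_iff hlm hln hmn i).2 hi⟩, ?_⟩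
  rintro _ ⟨⟨j, rfl⟩, hj⟩
  rw [huniq j ((h.mem_segment_union_segment_iff hlm hln hmn j).1 hj)]

end IsMinContainer

theorem tri_eq_convexHull_range (T : Fin 3 → Pt) :
    tri (T 0) (T 1) (T 2) = convexHull ℝ (Set.range T) := by
  rw [tri, range_eq_of_fin_three]

theorem isIsosceles_iff_exists_hasApex (T : Fin 3 → Pt) :
    IsIsosceles (T 0) (T 1) (T 2) ↔ ∃ a, HasApex T a := by
  have hexists : (∃ a, HasApex T a) ↔ HasApex T 0 ∨ HasApex T 1 ∨ HasApex T 2 := by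
    rw [Fin.exists_fin_succ, Fin.exists_fin_two]
    rfl
  rw [hexists, hasApex_iff (i := 1) (j := 2) (by decide) (by decide) (by decide),
    hasApex_iff (i := 0) (j := 2) (by decide) (by decide) (by decide),
    hasApex_iff (i := 0) (j := 1) (by decide) (by decide) (by decide), IsIsosceles,
    dist_comm (T 1) (T 0), dist_comm (T 2) (T 0), dist_comm (T 2) (T 1)]
  grind

theorem isIsoscelesContainer_iff (V T : Fin 3 → Pt) :
    IsIsoscelesContainer (V 0) (V 1) (V 2) (T 0) (T 1) (T 2) ↔
      AffineIndependent ℝ T ∧ (∃ a, HasApex T a) ∧ ∀ i, V i ∈ convexHull ℝ (Set.range T) := by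
  have heta : ![T 0, T 1, T 2] = T := FinVec.etaExpand_eq T
  rw [IsIsoscelesContainer, heta, isIsosceles_iff_exists_hasApex, tri_eq_convexHull_range,
    tri_eq_convexHull_range, (convex_convexHull ℝ _).convexHull_subset_iff, Set.range_subset_iff]

theorem triArea_eq_abs_det_mul (b : AffineBasis (Fin 3) ℝ Pt) (T : Fin 3 → Pt) :
    triArea (T 0) (T 1) (T 2) = |(b.toMatrix T).det| * triArea (b 0) (b 1) (b 2) := by
  rw [triArea, triArea, tri_eq_convexHull_range, tri_eq_convexHull_range,
    addHaar_convexHull_range volume b, ENNReal.toReal_mul, ENNReal.toReal_ofReal (abs_nonneg _)]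

theorem triArea_pos (b : AffineBasis (Fin 3) ℝ Pt) : 0 < triArea (b 0) (b 1) (b 2) := by
  rw [triArea, tri_eq_convexHull_range]
  refine ENNReal.toReal_pos (Measure.measure_pos_of_nonempty_interior _ ?_).ne' ?_
  · exact interior_convexHull_nonempty_iff_affineSpan_eq_top.2 b.tot
  · exact ((Set.finite_range b).isCompact_convexHull ℝ).measure_lt_top.ne

theorem isMinContainer_of_isMinIsoscelesContainer {V : Fin 3 → Pt} {b : AffineBasis (Fin 3) ℝ Pt}
    (hmin : IsMinIsoscelesContainer (V 0) (V 1) (V 2) (b 0) (b 1) (b 2)) : IsMinContainer V b := by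
  obtain ⟨-, hapex, hmem⟩ := (isIsoscelesContainer_iff V b).1 hmin.1
  refine ⟨hapex, hmem, fun {T a} hT ha hVT ↦ ?_⟩
  have hle := hmin.2 _ _ _ ((isIsoscelesContainer_iff V T).2 ⟨hT, ⟨a, ha⟩, hVT⟩)
  rw [triArea_eq_abs_det_mul b T] at hle
  exact (le_mul_iff_one_le_left (triArea_pos b)).1 hle

/-- let `S P R` be a minimum area isosceles container for the
triangle `A B C`, and let `m_S`, `m_P`, `m_R` be the midpoints of `PR`, `SR`,
`SP`. Then each of the closed boundary pieces `[m_P,S] ∪ [S,m_R]`,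
`[m_R,P] ∪ [P,m_S]`, `[m_S,R] ∪ [R,m_P]` contains precisely one of the
vertices `A`, `B`, `C`. -/
theorem statement16 (A B C S P R : Pt)
    (hABC : AffineIndependent ℝ ![A, B, C])
    (hmin : IsMinIsoscelesContainer A B C S P R) :
    (∃! X : Pt, X ∈ ({A, B, C} : Set Pt) ∧
      X ∈ segment ℝ (midpoint ℝ S R) (S) ∪ segment ℝ (S) (midpoint ℝ S P)) ∧
    (∃! X : Pt, X ∈ ({A, B, C} : Set Pt) ∧
      X ∈ segment ℝ (midpoint ℝ S P) (P) ∪ segment ℝ (P) (midpoint ℝ P R)) ∧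
    (∃! X : Pt, X ∈ ({A, B, C} : Set Pt) ∧
      X ∈ segment ℝ (midpoint ℝ P R) (R) ∪ segment ℝ (R) (midpoint ℝ S R)) := by
  have htop : affineSpan ℝ (Set.range ![S, P, R]) = ⊤ :=
    hmin.1.1.affineSpan_eq_top_iff_card_eq_finrank_add_one.2 (by simp)
  let b : AffineBasis (Fin 3) ℝ Pt := ⟨![S, P, R], hmin.1.1, htop⟩
  have h : IsMinContainer ![A, B, C] b := isMinContainer_of_isMinIsoscelesContainer hmin
  have hrange : Set.range ![A, B, C] = {A, B, C} := range_eq_of_fin_three _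
  have hS := h.existsUnique_mem_segment_union_segment hABC (l := 0) (m := 1) (n := 2)
    (by decide) (by decide) (by decide)
  have hP := h.existsUnique_mem_segment_union_segment hABC (l := 1) (m := 2) (n := 0)
    (by decide) (by decide) (by decide)
  have hR := h.existsUnique_mem_segment_union_segment hABC (l := 2) (m := 0) (n := 1)
    (by decide) (by decide) (by decide)
  rw [hrange] at hS hP hR
  refine ⟨hS, ?_, ?_⟩
  · rw [midpoint_comm S P]
    exact hP
  · rw [midpoint_comm P R, midpoint_comm S R]
    exact hR
end
end

section
/- Let ABC be a triangle and let SPR be a minimum area isosceles container for ABC. Then ABC and SPR have a common vertex: at least one of A, B, C equals one of S, P, R. -/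
open EuclideanGeometry MeasureTheory Real

noncomputable section

/-!
If no vertex is shared, each of `A`, `B`, `C` lies on at most one side line of the container, so at
most three of the nine half-plane conditions that keep them inside it are tight. The velocity
fields `x ↦ p • x + q • J x + v` of motions by similarities, with `J` the quarter turn, form a
space of dimension four, so a nonzero one is tangent to all the tight sides. After a change of
sign `p ≥ 0`. Unless `p = q = 0`, a short step along it expands `A B C` by a factor greater than
`1` (to first order if `p > 0`, to second order if only `q ≠ 0`) within the container. The inverse
similarity carries the container to a smaller one of the same shape. The field could degenerate to
a translation only if all three tight sides coincide, and then a homothety centred at a vertex on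
that side does the job.
-/

open Filter Module Set
open scoped Pointwise Similar Topology

section AffineBasis

variable {ι k V P : Type*} [Ring k] [AddCommGroup V] [Module k V] [AddTorsor V P]

lemma eq_vertex_of_coord_eq_zero [Finite ι] (b : AffineBasis ι k P) {p : P} {j : ι}
    (h : ∀ i ≠ j, b.coord i p = 0) : p = b j := by
  classical
  cases nonempty_fintype ι
  have hj : b.coord j p = 1 := by
    rw [← b.sum_coord_apply_eq_one p, Finset.sum_eq_single j (fun i _ hi => h i hi) (by simp)]
  refine b.ext_elem fun i => ?_
  obtain rfl | hi := eq_or_ne i j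
  · rw [hj, b.coord_apply_eq]
  · rw [h i hi, b.coord_apply_ne hi]

lemma eq_zero_of_linear_coord_eq_zero [Finite ι] (b : AffineBasis ι k P) {v : V} {j : ι}
    (h : ∀ i ≠ j, (b.coord i).linear v = 0) : v = 0 := by
  have hv : v +ᵥ b j = b j := eq_vertex_of_coord_eq_zero b fun i hi => by
    rw [AffineMap.map_vadd, h i hi, b.coord_apply_ne hi, zero_vadd]
  rwa [eq_comm, eq_vadd_iff_vsub_eq, vsub_self, eq_comm] at hv

lemma exists_third_index {m n : Fin 3} (h : m ≠ n) : ∃ j, ∀ i ≠ j, i = m ∨ i = n := by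
  revert m n
  decide

lemma exists_forall_coord_eq_zero_imp_eq (b : AffineBasis (Fin 3) k P) {p : P}
    (hp : ∀ i, p ≠ b i) : ∃ j, ∀ i, b.coord i p = 0 → i = j := by
  by_contra! h
  obtain ⟨m, hm, -⟩ := h 0
  obtain ⟨n, hn, hnm⟩ := h m
  obtain ⟨j, hj⟩ := exists_third_index hnm
  refine hp j (eq_vertex_of_coord_eq_zero b fun i hi => ?_)
  obtain rfl | rfl := hj i hi <;> assumption

end AffineBasis

lemma eventually_nonneg_apply_smul_vadd {V P : Type*} [AddCommGroup V] [Module ℝ V]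
    [AddTorsor V P] (f : P →ᵃ[ℝ] ℝ) {p : P} {v : V} (hp : 0 ≤ f p)
    (hv : f p = 0 → 0 ≤ f.linear v) : ∀ᶠ ε : ℝ in 𝓝[>] 0, 0 ≤ f (ε • v +ᵥ p) := by
  have hf (ε : ℝ) : f (ε • v +ᵥ p) = ε * f.linear v + f p := by
    rw [AffineMap.map_vadd, map_smul, smul_eq_mul, vadd_eq_add]
  simp only [hf]
  obtain hp0 | hp0 := hp.eq_or_lt
  · filter_upwards [self_mem_nhdsWithin] with ε hε
    rw [← hp0, add_zero]
    exact mul_nonneg (le_of_lt hε) (hv hp0.symm)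
  · have hcont : Continuous fun ε : ℝ => ε * f.linear v + f p := by fun_prop
    filter_upwards [nhdsWithin_le_nhds (hcont.continuousAt.eventually_const_lt (by simpa))]
      with ε hε using hε.le

section SimilarityMap

variable {R V : Type*} [CommRing R] [AddCommGroup V] [Module R V]

/-- The affine map `x ↦ p • x + q • J x + v`. When `J` is the quarter turn of a Euclidean plane,
these are the constant maps and the orientation-preserving similarities. They form a linear space,
so that they also serve as the velocity fields of motions by similarities. -/
def similarityMap (J : V →ₗ[R] V) (p q : R) (v : V) : V →ᵃ[R] V :=
  (p • LinearMap.id + q • J).toAffineMap + AffineMap.const R V v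

lemma similarityMap_apply (J : V →ₗ[R] V) (p q : R) (v x : V) :
    similarityMap J p q v x = p • x + q • J x + v := rfl

lemma similarityMap_neg (J : V →ₗ[R] V) (p q : R) (v x : V) :
    similarityMap J (-p) (-q) (-v) x = -similarityMap J p q v x := by
  simp only [similarityMap_apply]
  module

lemma smul_similarityMap_vadd (J : V →ₗ[R] V) (p q : R) (v x : V) (ε : R) :
    ε • similarityMap J p q v x +ᵥ x = similarityMap J (1 + ε * p) (ε * q) (ε • v) x := by
  simp only [similarityMap_apply, vadd_eq_add]
  module

end SimilarityMap

section VelocityField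

variable {k V : Type*} [Field k] [AddCommGroup V] [Module k V]

lemma exists_similarityMap_forall_apply_eq_zero {ι : Type*} [Fintype ι] [FiniteDimensional k V]
    (hι : Fintype.card ι < finrank k V + 2) (J : V →ₗ[k] V) (x : ι → V) (f : ι → Dual k V) :
    ∃ p q v, (p, q, v) ≠ 0 ∧ ∀ i, f i (similarityMap J p q v (x i)) = 0 := by
  let Φ : k × k × V →ₗ[k] ι → k := LinearMap.pi fun i => f i ∘ₗ
    (LinearMap.toSpanSingleton k V (x i)).coprod
      ((LinearMap.toSpanSingleton k V (J (x i))).coprod LinearMap.id)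
  have hker : LinearMap.ker Φ ≠ ⊥ := LinearMap.ker_ne_bot_of_finrank_lt (by
    simp only [finrank_fintype_fun_eq_card, finrank_prod, finrank_self]
    lia)
  obtain ⟨⟨p, q, v⟩, hΦ, hne⟩ := Submodule.exists_mem_ne_zero_of_ne_bot hker
  refine ⟨p, q, v, hne, fun i => ?_⟩
  simpa [Φ, similarityMap_apply, add_assoc] using congrFun hΦ i

variable [LinearOrder k] [IsStrictOrderedRing k]

lemma exists_similarityMap_linear_coord_eq_zero (b : AffineBasis (Fin 3) k V) (J : V →ₗ[k] V)
    (x : Fin 3 → V) {j : Fin 3 → Fin 3} {m n : Fin 3} (hmn : j m ≠ j n) :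
    ∃ p q v, 0 ≤ p ∧ (p ≠ 0 ∨ q ≠ 0) ∧
      ∀ i, (b.coord (j i)).linear (similarityMap J p q v (x i)) = 0 := by
  have : FiniteDimensional k V := b.finiteDimensional
  have hV : finrank k V + 1 = 3 := b.card_eq_finrank_add_one.symm
  obtain ⟨p, q, v, hne, hzero⟩ := exists_similarityMap_forall_apply_eq_zero
    (by rw [Fintype.card_fin]; lia) J x fun i => (b.coord (j i)).linear
  have hpq : p ≠ 0 ∨ q ≠ 0 := by
    by_contra! h
    obtain ⟨rfl, rfl⟩ := h
    obtain ⟨l, hl⟩ := exists_third_index hmn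
    have hv : v = 0 := eq_zero_of_linear_coord_eq_zero b fun i hi => by
      obtain rfl | rfl := hl i hi
      · simpa [similarityMap_apply] using hzero m
      · simpa [similarityMap_apply] using hzero n
    exact hne (by rw [hv]; rfl)
  obtain hp | hp := le_total 0 p
  · exact ⟨p, q, v, hp, hpq, hzero⟩
  · refine ⟨-p, -q, -v, neg_nonneg.2 hp, by simpa using hpq, fun i => ?_⟩
    rw [similarityMap_neg, map_neg, hzero, neg_zero]

lemma exists_similarityMap_linear_coord_nonneg (b : AffineBasis (Fin 3) k V) (J : V →ₗ[k] V)
    {x : Fin 3 → V} {j : Fin 3 → Fin 3} (hx : ∀ n, 0 ≤ b.coord (j n) (x n)) :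
    ∃ p q v, 0 ≤ p ∧ (p ≠ 0 ∨ q ≠ 0) ∧
      ∀ n, 0 ≤ (b.coord (j n)).linear (similarityMap J p q v (x n)) := by
  by_cases hj : ∃ m n, j m ≠ j n
  · obtain ⟨m, n, hmn⟩ := hj
    obtain ⟨p, q, v, hp, hpq, hzero⟩ := exists_similarityMap_linear_coord_eq_zero b J x hmn
    exact ⟨p, q, v, hp, hpq, fun i => (hzero i).ge⟩
  · push Not at hj
    obtain ⟨i, hi⟩ : ∃ i, i ≠ j 0 := exists_ne _
    refine ⟨1, 0, -b i, zero_le_one, Or.inl one_ne_zero, fun n => ?_⟩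
    have hvel : similarityMap J 1 0 (-b i) (x n) = x n -ᵥ b i := by
      simp [similarityMap_apply, sub_eq_add_neg]
    rw [hvel, AffineMap.linearMap_vsub, b.coord_apply_ne (hj n 0 ▸ hi.symm), vsub_eq_sub, sub_zero]
    exact hx n

end VelocityField

section NormedSpace

variable {E : Type*} [NormedAddCommGroup E] [NormedSpace ℝ E]

lemma measure_convexHull_range_ne_top [MeasurableSpace E] (μ : Measure E)
    [IsFiniteMeasureOnCompacts μ] {ι : Type*} [Finite ι] (t : ι → E) :
    μ (convexHull ℝ (range t)) ≠ ⊤ :=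
  ((finite_range t).isCompact_convexHull (𝕜 := ℝ)).measure_ne_top

variable [FiniteDimensional ℝ E]

lemma measure_convexHull_range_ne_zero [MeasurableSpace E] (μ : Measure E) [μ.IsOpenPosMeasure]
    {ι : Type*} (b : AffineBasis ι ℝ E) : μ (convexHull ℝ (range b)) ≠ 0 :=
  (Measure.measure_pos_of_nonempty_interior μ
    (interior_convexHull_nonempty_iff_affineSpan_eq_top.2 b.tot)).ne'

lemma bijective_of_dist_eq_mul {f : E →ᵃ[ℝ] E} {r : ℝ} (hr : 0 < r)
    (hf : ∀ x y, dist (f x) (f y) = r * dist x y) : Function.Bijective f := by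
  have hinj : Function.Injective f := fun x y hxy => by
    simpa [hxy, hr.ne'] using (hf x y).symm
  exact ⟨hinj, f.linear_surjective_iff.1
    (LinearMap.injective_iff_surjective.1 (f.linear_injective_iff.2 hinj))⟩

end NormedSpace

section Volume

variable {E : Type*} [NormedAddCommGroup E] [InnerProductSpace ℝ E] [FiniteDimensional ℝ E]
  [MeasurableSpace E] [BorelSpace E]

lemma volume_image_of_dist_eq_mul {f : E → E} {r : ℝ} (hr : 0 < r)
    (hf : ∀ x y, dist (f x) (f y) = r * dist x y) (s : Set E) :
    volume (f '' s) = ENNReal.ofReal (r ^ finrank ℝ E) * volume s := by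
  have hg : Isometry (r⁻¹ • f) := Isometry.of_dist_eq fun x y => by
    rw [Pi.smul_apply, Pi.smul_apply, dist_smul₀, hf, norm_inv, norm_of_nonneg hr.le,
      inv_mul_cancel_left₀ hr.ne']
  have himage : f '' s = r • ((r⁻¹ • f) '' s) := by
    have hsmul : (r⁻¹ • f) '' s = r⁻¹ • f '' s := image_comp (r⁻¹ • ·) f s
    rw [hsmul, smul_inv_smul₀ hr.ne']
  rw [himage, Measure.addHaar_smul, abs_of_pos (by positivity),
    ← InnerProductSpace.euclideanHausdorffMeasure_eq_volume, hg.euclideanHausdorffMeasure_image]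

lemma exists_similar_volume_lt [Nontrivial E] {ι : Type*} [Finite ι] (b : AffineBasis ι ℝ E)
    {s : Set E} {f : E →ᵃ[ℝ] E} {r : ℝ} (hr : 1 < r)
    (hf : ∀ x y, dist (f x) (f y) = r * dist x y) (hs : MapsTo f s (convexHull ℝ (range b))) :
    ∃ t : ι → E, AffineIndependent ℝ t ∧ (t ∼ b) ∧ s ⊆ convexHull ℝ (range t) ∧
      volume (convexHull ℝ (range t)) < volume (convexHull ℝ (range b)) := by
  have hr0 : 0 < r := zero_lt_one.trans hr
  have hbij := bijective_of_dist_eq_mul hr0 hf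
  obtain ⟨t, ht⟩ : ∃ t, f ∘ t = b := hbij.surjective.comp_left b
  have himage : f '' convexHull ℝ (range t) = convexHull ℝ (range b) := by
    rw [f.image_convexHull, ← range_comp, ht]
  refine ⟨t, AffineIndependent.of_comp f (ht ▸ b.ind), ?_, ?_, ?_⟩
  · refine Similar.symm (similar_iff_exists_pos_dist_eq.2 ⟨r, hr0, fun i j => ?_⟩)
    rw [← ht, Function.comp_apply, Function.comp_apply, hf]
  · rwa [← himage, mapsTo_iff_subset_preimage, preimage_image_eq _ hbij.injective] at hs
  · have hpos := measure_convexHull_range_ne_zero volume b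
    rw [← himage, volume_image_of_dist_eq_mul hr0 hf] at hpos ⊢
    conv_lhs => rw [← one_mul (volume _)]
    refine (ENNReal.mul_lt_mul_iff_left (right_ne_zero_of_mul hpos)
      (measure_convexHull_range_ne_top volume t)).2 ?_
    exact ENNReal.one_lt_ofReal.2 (one_lt_pow₀ hr finrank_pos.ne')

end Volume

section Plane

variable {E : Type*} [NormedAddCommGroup E] [InnerProductSpace ℝ E] [Fact (finrank ℝ E = 2)]

lemma norm_smul_add_smul_rightAngleRotation (o : Orientation ℝ E (Fin 2)) (p q : ℝ) (x : E) :
    ‖p • x + q • o.rightAngleRotation x‖ = √(p ^ 2 + q ^ 2) * ‖x‖ := by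
  have horth : inner ℝ (p • x) (q • o.rightAngleRotation x) = 0 := by
    simp [inner_smul_left, inner_smul_right]
  rw [← sq_eq_sq₀ (norm_nonneg _) (by positivity), norm_add_sq_real, horth, norm_smul, norm_smul,
    o.rightAngleRotation.norm_map, mul_pow, mul_pow, mul_pow, sq_sqrt (by positivity)]
  simp only [norm_eq_abs, sq_abs]
  ring

lemma dist_similarityMap (o : Orientation ℝ E (Fin 2)) (p q : ℝ) (v x y : E) :
    dist (similarityMap o.rightAngleRotation.toLinearEquiv p q v x)
      (similarityMap o.rightAngleRotation.toLinearEquiv p q v y) =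
        √(p ^ 2 + q ^ 2) * dist x y := by
  rw [dist_eq_norm, dist_eq_norm, ← norm_smul_add_smul_rightAngleRotation o, map_sub]
  simp only [similarityMap_apply, LinearEquiv.coe_coe, LinearIsometryEquiv.coe_toLinearEquiv]
  congr 1
  module

lemma one_lt_sqrt_one_add_mul_sq_add_mul_sq {p q ε : ℝ} (hp : 0 ≤ p) (hpq : p ≠ 0 ∨ q ≠ 0)
    (hε : 0 < ε) : 1 < √((1 + ε * p) ^ 2 + (ε * q) ^ 2) := by
  rw [lt_sqrt zero_le_one]
  have hnorm : 0 < p ^ 2 + q ^ 2 := by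
    obtain h | h := hpq <;> positivity
  linear_combination 2 * mul_nonneg hε.le hp + mul_pos (pow_pos hε 2) hnorm

lemma exists_expanding_mapsTo_convexHull (b : AffineBasis (Fin 3) ℝ E) {x : Fin 3 → E}
    (hx : range x ⊆ convexHull ℝ (range b)) (hne : ∀ n i, x n ≠ b i) :
    ∃ (f : E →ᵃ[ℝ] E) (r : ℝ), 1 < r ∧ (∀ y z, dist (f y) (f z) = r * dist y z) ∧
      MapsTo f (range x) (convexHull ℝ (range b)) := by
  have : FiniteDimensional ℝ E := .of_fact_finrank_eq_two
  simp only [b.convexHull_eq_nonneg_coord, range_subset_iff, mapsTo_range_iff,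
    mem_ofPred_eq] at hx ⊢
  choose j hj using fun n => exists_forall_coord_eq_zero_imp_eq b (hne n)
  let o : Orientation ℝ E (Fin 2) := (finBasisOfFinrankEq ℝ E Fact.out).orientation
  let J : E →ₗ[ℝ] E := o.rightAngleRotation.toLinearEquiv
  obtain ⟨p, q, v, hp, hpq, hvel⟩ :=
    exists_similarityMap_linear_coord_nonneg b J fun n => hx n (j n)
  have hstay : ∀ᶠ ε : ℝ in 𝓝[>] 0, ∀ n i,
      0 ≤ b.coord i (ε • similarityMap J p q v (x n) +ᵥ x n) :=
    eventually_all.2 fun n => eventually_all.2 fun i =>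
      eventually_nonneg_apply_smul_vadd (b.coord i) (hx n i) fun hi => hj n i hi ▸ hvel n
  obtain ⟨ε, hε, hεpos⟩ := (hstay.and self_mem_nhdsWithin).exists
  simp only [smul_similarityMap_vadd] at hε
  exact ⟨_, _, one_lt_sqrt_one_add_mul_sq_add_mul_sq hp hpq hεpos,
    dist_similarityMap o _ _ _, hε⟩

theorem statement17_general [FiniteDimensional ℝ E] [MeasurableSpace E] [BorelSpace E]
    {x t : Fin 3 → E} (ht : AffineIndependent ℝ t) (hx : range x ⊆ convexHull ℝ (range t))
    (hmin : ∀ t' : Fin 3 → E, AffineIndependent ℝ t' → t' ∼ t →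
      range x ⊆ convexHull ℝ (range t') →
        volume (convexHull ℝ (range t)) ≤ volume (convexHull ℝ (range t'))) :
    ∃ n i, x n = t i := by
  have hE : finrank ℝ E = 2 := Fact.out
  have : Nontrivial E := nontrivial_of_finrank_pos (R := ℝ) (by lia)
  let b : AffineBasis (Fin 3) ℝ E :=
    ⟨t, ht, ht.affineSpan_eq_top_iff_card_eq_finrank_add_one.2 (by simp [hE])⟩
  by_contra! hne
  obtain ⟨f, r, hr, hf, hmaps⟩ := exists_expanding_mapsTo_convexHull b hx hne
  obtain ⟨t', ht', hsim, hsub, hlt⟩ := exists_similar_volume_lt b hr hf hmaps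
  exact (hmin t' ht' hsim hsub).not_gt hlt

end Plane

section Triangle

lemma tri_eq_convexHull_range_s17 (A B C : Pt) : tri A B C = convexHull ℝ (range ![A, B, C]) := by
  simp only [tri, Matrix.range_cons, Matrix.range_empty, union_empty, singleton_union]

lemma IsIsosceles.of_similar {A B C A' B' C' : Pt} (h : IsIsosceles A B C)
    (hsim : ![A', B', C'] ∼ ![A, B, C]) : IsIsosceles A' B' C' := by
  obtain ⟨r, hr, hdist⟩ := similar_iff_exists_pos_dist_eq.1 hsim
  have hAB : dist A' B' = r * dist A B := hdist 0 1
  have hBC : dist B' C' = r * dist B C := hdist 1 2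
  have hCA : dist C' A' = r * dist C A := hdist 2 0
  simpa only [IsIsosceles, hAB, hBC, hCA, mul_right_inj' hr.ne'] using h

lemma IsMinIsoscelesContainer.volume_le_of_similar {A B C S P R : Pt}
    (h : IsMinIsoscelesContainer A B C S P R) {t : Fin 3 → Pt} (ht : AffineIndependent ℝ t)
    (hsim : t ∼ ![S, P, R]) (hsub : range ![A, B, C] ⊆ convexHull ℝ (range t)) :
    volume (convexHull ℝ (range ![S, P, R])) ≤ volume (convexHull ℝ (range t)) := by
  have heta : ![t 0, t 1, t 2] = t := FinVec.etaExpand_eq t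
  have hcont : IsIsoscelesContainer A B C (t 0) (t 1) (t 2) := by
    refine ⟨heta.symm ▸ ht, h.1.2.1.of_similar (heta.symm ▸ hsim), ?_⟩
    rw [tri_eq_convexHull_range_s17, tri_eq_convexHull_range_s17, heta]
    exact convexHull_min hsub (convex_convexHull ℝ _)
  have harea := h.2 _ _ _ hcont
  rwa [triArea, triArea, tri_eq_convexHull_range_s17, tri_eq_convexHull_range_s17, heta,
    ENNReal.toReal_le_toReal (measure_convexHull_range_ne_top volume _)
      (measure_convexHull_range_ne_top volume _)] at harea

end Triangle

/-- a triangle `A B C` and any of its minimum area isosceles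
containers `S P R` have a common vertex. -/
theorem statement17 (A B C S P R : Pt)
    (hABC : AffineIndependent ℝ ![A, B, C])
    (hmin : IsMinIsoscelesContainer A B C S P R) :
    A ∈ ({S, P, R} : Set Pt) ∨ B ∈ ({S, P, R} : Set Pt) ∨
      C ∈ ({S, P, R} : Set Pt) := by
  obtain ⟨hSPR, -, hsub⟩ := hmin.1
  rw [tri_eq_convexHull_range_s17, tri_eq_convexHull_range_s17] at hsub
  have : Fact (finrank ℝ Pt = 2) := ⟨finrank_euclideanSpace_fin⟩
  simpa [Fin.exists_fin_succ, or_assoc] using statement17_general hSPR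
    ((subset_convexHull ℝ _).trans hsub) fun _ => hmin.volume_le_of_similar
end
end
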